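/- arXiv:1603.03893 — 2 statements merged into one kernel-verified Lean document; each statement's English description precedes it below -/
import Mathlib

section
/- Let b be a basic D-sequence with ratios bounded by L (q_n ≤ L for all n ≥ 1), and let (x_n) be a sequence of integers such that x_n → 0 in the b-adic topology λ_b (meaning: for every m there exists N such that b_m divides x_n for all n ≥ N) and such that x_n ≠ 0 for infinitely many n. Then there exist strictly increasing sequences of natural numbers (n_j) and (m_j) such that n_{j+1} − n_j > j for all j, and for every j the image of x_{m_j} / b_{n_j + 1} in 𝕋 = ℝ/ℤ does not lie in 𝕋_L (i.e. the distance from the real number x_{m_j} / b_{n_j + 1} to the nearest integer is strictly greater than 1/(4L)). -/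
/-!
If `b n ∣ z` but `b (n + 1) ∤ z`, then `u = z / b (n + 1)` is a nonzero point of `ℝ/ℤ` killed by
`q = b (n + 1) / b n`, so it lies at distance at least `1 / q > 1 / (4 q)` from `0`. A term
`x m ≠ 0` divisible by `b K` has such an exit index `n ≥ K`, because only finitely many `b n` divide
a nonzero integer. Since `x` tends to `0` in the `b`-adic topology without being eventually `0`,
both `n` and `m` can be taken arbitrarily large, and the two sequences are then chosen greedily.
-/

/-- A `D`-sequence: `b 0 = 1`, consecutive terms are distinct, and each term
divides the next. -/
def IsDSequence (b : ℕ → ℕ) : Prop :=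
  b 0 = 1 ∧ (∀ n, b n ≠ b (n + 1)) ∧ ∀ n, b n ∣ b (n + 1)

/-- For a D-sequence, `q (j+1) = b (j+1) / b j`. -/
def qRatio (b : ℕ → ℕ) (j : ℕ) : ℕ := b (j + 1) / b j

/-- `𝕋_m`: the set of points of `𝕋 = ℝ/ℤ` at distance at most `1/(4m)` from `0`. -/
def Tm (m : ℕ) : Set (AddCircle (1 : ℝ)) := {x | ‖x‖ ≤ 1 / (4 * m)}

theorem Tm_subset_Tm {m n : ℕ} (hm : 0 < m) (hmn : m ≤ n) : Tm n ⊆ Tm m := by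
  intro u (hu : ‖u‖ ≤ 1 / (4 * n))
  exact hu.trans (by gcongr)

theorem notMem_Tm_of_nsmul_eq_zero {q : ℕ} {u : UnitAddCircle} (hq : 0 < q) (hqu : q • u = 0)
    (hu : u ≠ 0) : u ∉ Tm q := by
  have hfin : IsOfFinAddOrder u := isOfFinAddOrder_iff_nsmul_eq_zero.2 ⟨q, hq, hqu⟩
  have one_le : 1 ≤ q * ‖u‖ := calc
    (1 : ℝ) ≤ addOrderOf u • ‖u‖ := AddCircle.le_add_order_smul_norm_of_isOfFinAddOrder hfin hu
    _ = addOrderOf u * ‖u‖ := nsmul_eq_mul _ _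
    _ ≤ q * ‖u‖ := by gcongr; exact addOrderOf_le_of_nsmul_eq_zero hq hqu
  intro (hle : ‖u‖ ≤ 1 / (4 * q))
  rw [le_div_iff₀ (by positivity)] at hle
  linarith

theorem coe_intCast_div_natCast_eq_zero_iff {z : ℤ} {d : ℕ} (hd : d ≠ 0) :
    ((z / d : ℝ) : UnitAddCircle) = 0 ↔ (d : ℤ) ∣ z := by
  have hd' : (d : ℝ) ≠ 0 := mod_cast hd
  rw [AddCircle.coe_eq_zero_iff]
  constructor
  · rintro ⟨k, hk⟩
    rw [zsmul_one, eq_div_iff hd'] at hk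
    exact ⟨k, by rw [mul_comm]; exact_mod_cast hk.symm⟩
  · rintro ⟨k, rfl⟩
    exact ⟨k, by rw [zsmul_one]; push_cast; field_simp⟩

theorem exists_seq_of_frequently_of_eventually {α : Type*} {l : Filter α} {P : α → Prop}
    {r : α → α → Prop} (hP : ∃ᶠ y in l, P y) (hr : ∀ x, ∀ᶠ y in l, r x y) :
    ∃ f : ℕ → α, (∀ n, P (f n)) ∧ ∀ m n, m < n → r (f m) (f n) :=
  exists_seq_of_forall_finset_exists P r fun s _ ↦
    (hP.and_eventually ((Filter.eventually_all_finset s).2 fun x _ ↦ hr x)).exists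

namespace IsDSequence

open Filter

variable {b : ℕ → ℕ}

theorem pos (hb : IsDSequence b) (n : ℕ) : 0 < b n := by
  obtain ⟨-, hne, hdvd⟩ := hb
  refine Nat.pos_of_ne_zero fun hn ↦ hne n ?_
  exact hn.trans (Nat.eq_zero_of_zero_dvd (hn ▸ hdvd n)).symm

theorem strictMono (hb : IsDSequence b) : StrictMono b :=
  strictMono_nat_of_lt_succ fun n ↦
    (Nat.le_of_dvd (hb.pos (n + 1)) (hb.2.2 n)).lt_of_ne (hb.2.1 n)

theorem mul_qRatio (hb : IsDSequence b) (n : ℕ) : b n * qRatio b n = b (n + 1) :=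
  Nat.mul_div_cancel' (hb.2.2 n)

theorem qRatio_pos (hb : IsDSequence b) (n : ℕ) : 0 < qRatio b n :=
  Nat.div_pos (hb.strictMono.monotone n.le_succ) (hb.pos n)

theorem exists_dvd_and_not_dvd_succ (hb : IsDSequence b) {z : ℤ} (hz : z ≠ 0) {K : ℕ}
    (hK : (b K : ℤ) ∣ z) : ∃ n ≥ K, (b n : ℤ) ∣ z ∧ ¬ (b (n + 1) : ℤ) ∣ z := by
  by_contra! h
  have hdvd (n : ℕ) (hn : K ≤ n) : (b n : ℤ) ∣ z := Nat.le_induction hK h n hn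
  have hlt : z.natAbs < b (K + z.natAbs + 1) := calc
    z.natAbs < K + z.natAbs + 1 := by lia
    _ ≤ b (K + z.natAbs + 1) := hb.strictMono.le_apply
  exact hz (Int.eq_zero_of_dvd_of_natAbs_lt_natAbs (hdvd (K + z.natAbs + 1) (by lia)) hlt)

theorem coe_div_notMem_Tm (hb : IsDSequence b) {z : ℤ} {n : ℕ} (hdvd : (b n : ℤ) ∣ z)
    (hndvd : ¬ (b (n + 1) : ℤ) ∣ z) :
    ((z / b (n + 1) : ℝ) : UnitAddCircle) ∉ Tm (qRatio b n) := by
  have hq : (qRatio b n : ℝ) ≠ 0 := mod_cast (hb.qRatio_pos n).ne'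
  have hmul : qRatio b n • (z / b (n + 1) : ℝ) = z / b n := by
    rw [← hb.mul_qRatio n, nsmul_eq_mul]
    push_cast
    field_simp
  refine notMem_Tm_of_nsmul_eq_zero (hb.qRatio_pos n) ?_
    (mt (coe_intCast_div_natCast_eq_zero_iff (hb.pos (n + 1)).ne').1 hndvd)
  rw [← AddCircle.coe_nsmul, hmul]
  exact (coe_intCast_div_natCast_eq_zero_iff (hb.pos n).ne').2 hdvd

theorem frequently_coe_div_notMem_Tm (hb : IsDSequence b) {x : ℕ → ℤ}
    (hx : ∀ k, ∃ᶠ m in atTop, (b k : ℤ) ∣ x m ∧ x m ≠ 0) :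
    ∃ᶠ p : ℕ × ℕ in atTop,
      ((x p.2 / b (p.1 + 1) : ℝ) : UnitAddCircle) ∉ Tm (qRatio b p.1) := by
  refine frequently_atTop.2 fun ⟨K, M⟩ ↦ ?_
  obtain ⟨m, hMm, hK, hm⟩ := frequently_atTop.1 (hx K) M
  obtain ⟨n, hKn, hdvd, hndvd⟩ := hb.exists_dvd_and_not_dvd_succ hm hK
  exact ⟨(n, m), ⟨hKn, hMm⟩, hb.coe_div_notMem_Tm hdvd hndvd⟩

end IsDSequence

theorem killing_claim_general {b : ℕ → ℕ} (hb : IsDSequence b) {x : ℕ → ℤ}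
    (hconv : ∀ m : ℕ, ∃ N : ℕ, ∀ n ≥ N, (b m : ℤ) ∣ x n)
    (hnq : {n : ℕ | x n ≠ 0}.Infinite) :
    ∃ nseq mseq : ℕ → ℕ, StrictMono nseq ∧ StrictMono mseq ∧
      (∀ j, nseq (j + 1) - nseq j > j) ∧
      ∀ j, ((x (mseq j) / b (nseq j + 1) : ℝ) : UnitAddCircle) ∉ Tm (qRatio b (nseq j)) := by
  have hx (k : ℕ) : ∃ᶠ m in Filter.atTop, (b k : ℤ) ∣ x m ∧ x m ≠ 0 :=
    (Filter.eventually_atTop.2 (hconv k)).and_frequently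
      (Nat.frequently_atTop_iff_infinite.2 hnq)
  -- Doubling forces the gaps: `nseq (j + 1) - nseq j > nseq j ≥ j`.
  have hgrow (p : ℕ × ℕ) : ∀ᶠ p' : ℕ × ℕ in Filter.atTop, 2 * p.1 < p'.1 ∧ p.2 < p'.2 :=
    (Filter.eventually_ge_atTop (2 * p.1 + 1, p.2 + 1)).mono fun _ h ↦ ⟨h.1, h.2⟩
  obtain ⟨f, hf, hlt⟩ :=
    exists_seq_of_frequently_of_eventually (hb.frequently_coe_div_notMem_Tm hx) hgrow
  have hstep (j : ℕ) : 2 * (f j).1 < (f (j + 1)).1 ∧ (f j).2 < (f (j + 1)).2 :=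
    hlt j (j + 1) j.lt_succ_self
  have hn : StrictMono fun j ↦ (f j).1 := strictMono_nat_of_lt_succ fun j ↦ by grind
  have hm : StrictMono fun j ↦ (f j).2 := strictMono_nat_of_lt_succ fun j ↦ (hstep j).2
  exact ⟨_, _, hn, hm, fun j ↦ by grind [hn.le_apply (x := j)], hf⟩

theorem killing_claim (b : ℕ → ℕ) (hb : IsDSequence b)
    (hbasic : ∀ j, (qRatio b j).Prime) (L : ℕ) (hL : ∀ j, qRatio b j ≤ L)
    (x : ℕ → ℤ)
    (hconv : ∀ m : ℕ, ∃ N : ℕ, ∀ n ≥ N, (b m : ℤ) ∣ x n)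
    (hnq : {n : ℕ | x n ≠ 0}.Infinite) :
    ∃ nseq mseq : ℕ → ℕ, StrictMono nseq ∧ StrictMono mseq ∧
      (∀ j, nseq (j + 1) - nseq j > j) ∧
      (∀ j, ((x (mseq j) : ℝ) / (b (nseq j + 1) : ℝ) : AddCircle (1 : ℝ)) ∉ Tm L) := by
  obtain ⟨nseq, mseq, hn, hm, hgap, hT⟩ := killing_claim_general hb hconv hnq
  exact ⟨nseq, mseq, hn, hm, hgap,
    fun j hj ↦ hT j (Tm_subset_Tm (hb.qRatio_pos _) (hL _) hj)⟩
end

section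
/- Let k ∈ 𝕋 = ℝ/ℤ and let m, n be positive integers. If the elements k, 2k, …, mk all lie in 𝕋_+ and moreover m·k ∈ 𝕋_n, then k ∈ 𝕋_{nm}. -/
/-- `𝕋_+ = 𝕋_1`: the set of points of `𝕋 = ℝ/ℤ` at distance at most `1/4` from `0`. -/
def Tplus : Set (AddCircle (1 : ℝ)) := Tm 1

/-!
Lift `k` to a real number `x` of least absolute value. As long as the multiples of `k` stay within
a third of a period of `0`, the step from `i * x` to `(i + 1) * x` is too short to jump over the
third of the circle opposite `0`, so the multiples of `x` cannot wrap around. Hence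
`‖m • k‖ = m * ‖k‖`, and a bound on `m • k` can be divided by `m`.
-/

section

variable {p : ℝ}

theorem exists_coe_eq_and_abs_eq_norm (k : AddCircle p) :
    ∃ x : ℝ, (x : AddCircle p) = k ∧ |x| = ‖k‖ := by
  induction k using QuotientAddGroup.induction_on with
  | H y =>
    refine ⟨y - round (p⁻¹ * y) * p, ?_, (AddCircle.norm_eq p).symm⟩
    rw [← zsmul_eq_mul, AddCircle.coe_sub, AddCircle.coe_zsmul, AddCircle.coe_period, smul_zero,
      sub_zero]

theorem norm_coe_eq_abs_or_period_sub_abs_le_norm_coe (x : ℝ) :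
    ‖(x : AddCircle p)‖ = |x| ∨ |p| - |x| ≤ ‖(x : AddCircle p)‖ := by
  rw [AddCircle.norm_eq]
  set r : ℤ := round (p⁻¹ * x)
  obtain hr | hr := eq_or_ne r 0
  · simp [hr]
  · right
    have one_le_abs_r : (1 : ℝ) ≤ |(r : ℝ)| := mod_cast Int.one_le_abs hr
    calc |p| - |x| ≤ |r * p| - |x| := by
          rw [abs_mul]
          gcongr
          exact le_mul_of_one_le_left (abs_nonneg p) one_le_abs_r
      _ ≤ |r * p - x| := abs_sub_abs_le_abs_sub _ _
      _ = |x - r * p| := abs_sub_comm _ _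

theorem norm_coe_eq_abs_of_lt {x : ℝ} (hx : |x| < 2 * |p| / 3)
    (hnorm : ‖(x : AddCircle p)‖ < |p| / 3) : ‖(x : AddCircle p)‖ = |x| :=
  (norm_coe_eq_abs_or_period_sub_abs_le_norm_coe x).resolve_right fun h ↦ by linarith

-- Strictness matters: for `p ≠ 0`, all multiples of the class `k` of `p / 3` have norm at most
-- `|p| / 3`, yet `‖2 • k‖ = ‖k‖`.
theorem norm_nsmul_eq_mul_norm_of_forall_lt {k : AddCircle p} {m : ℕ}
    (hmult : ∀ i : ℕ, 1 ≤ i → i ≤ m → ‖i • k‖ < |p| / 3) : ‖m • k‖ = m * ‖k‖ := by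
  obtain ⟨x, rfl, hx⟩ := exists_coe_eq_and_abs_eq_norm k
  induction m with
  | zero => simp
  | succ m ih =>
    obtain rfl | hm := m.eq_zero_or_pos
    · simp
    have abs_nsmul_x (i : ℕ) : |i • x| = i * |x| := by rw [abs_nsmul, nsmul_eq_mul]
    have norm_nsmul_x : ‖m • (x : AddCircle p)‖ = m * |x| := by
      rw [ih fun i h1 hi ↦ hmult i h1 (by omega), hx]
    have abs_x_lt : |x| < |p| / 3 := by
      simpa [hx] using hmult 1 le_rfl (by omega)
    have mul_abs_x_lt : m * |x| < |p| / 3 := norm_nsmul_x ▸ hmult m hm (by omega)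
    have abs_succ_nsmul_x_lt : |(m + 1) • x| < 2 * |p| / 3 := by
      rw [abs_nsmul_x]
      push_cast
      linarith
    rw [← hx, ← abs_nsmul_x, ← AddCircle.coe_nsmul]
    exact norm_coe_eq_abs_of_lt abs_succ_nsmul_x_lt (hmult (m + 1) (by omega) le_rfl)

theorem lemma1_multiples_in_Tplus_general {k : AddCircle p} {m : ℕ} {r : ℝ} (hm : 0 < m)
    (hmult : ∀ i : ℕ, 1 ≤ i → i ≤ m → ‖i • k‖ < |p| / 3) (hmk : ‖m • k‖ ≤ r) : ‖k‖ ≤ r / m := by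
  rwa [le_div_iff₀' (by positivity), ← norm_nsmul_eq_mul_norm_of_forall_lt hmult]

end

theorem norm_lt_third_of_mem_Tplus {x : AddCircle (1 : ℝ)} (hx : x ∈ Tplus) :
    ‖x‖ < |(1 : ℝ)| / 3 := by
  have norm_le : ‖x‖ ≤ 1 / (4 * (1 : ℕ)) := hx
  norm_num at norm_le ⊢
  linarith

theorem mem_Tm_mul_iff {x : AddCircle (1 : ℝ)} {m n : ℕ} :
    x ∈ Tm (n * m) ↔ ‖x‖ ≤ 1 / (4 * n) / m := by
  rw [Tm, Set.mem_ofPred_eq, Nat.cast_mul, ← mul_assoc, div_div]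

theorem lemma1_multiples_in_Tplus (k : AddCircle (1 : ℝ)) (m n : ℕ)
    (hm : 0 < m) (hn : 0 < n)
    (hmult : ∀ i : ℕ, 1 ≤ i → i ≤ m → i • k ∈ Tplus)
    (hmk : m • k ∈ Tm n) :
    k ∈ Tm (n * m) :=
  mem_Tm_mul_iff.2 <| lemma1_multiples_in_Tplus_general hm
    (fun i h1 hi ↦ norm_lt_third_of_mem_Tplus (hmult i h1 hi)) hmk
end
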